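/- Let α = [0; a₁, a₂, …] ∈ (0,1) be the irrational number with partial quotients a_{n²} = 4n² and aₙ = 1 for n not a perfect square, let (qₙ) be the denominators of the convergents of α, and let (xₙ) be the increasing enumeration of {r qₙ : n ∈ ℕ, 1 ≤ r ≤ a_{n+1}}. Then the set-difference t^s_{(qₙ)}(𝕋) \ t^s_{(xₙ)}(𝕋) has cardinality 𝔠 (the cardinality of the continuum). -/

import Mathlib

open Filter Topology

noncomputable section

/-- The circle group `𝕋 = ℝ/ℤ`. -/
abbrev Circle1 : Type := AddCircle (1 : ℝ)

/-- A set of naturals has natural density zero. -/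
def DensityZero (A : Set ℕ) : Prop :=
  Tendsto (fun n : ℕ => ((A ∩ Set.Icc 1 n).ncard : ℝ) / n) atTop (𝓝 0)

/-- Statistical convergence to `0` of a sequence in the circle. -/
def StatTendstoZero (x : ℕ → Circle1) : Prop :=
  ∀ ε : ℝ, 0 < ε → DensityZero {n : ℕ | ε ≤ ‖x n‖}

/-- The characterized subgroup `t_(a_n)(𝕋)`. -/
def charSet (a : ℕ → ℤ) : Set Circle1 :=
  {x : Circle1 | Tendsto (fun n : ℕ => a n • x) atTop (𝓝 0)}

/-- The statistically characterized subgroup `t^s_(a_n)(𝕋)`. -/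
def statCharSet (a : ℕ → ℤ) : Set Circle1 :=
  {x : Circle1 | StatTendstoZero (fun n : ℕ => a n • x)}

namespace CF

/-- Gauss-map orbit of `α`: `G α 0 = α`, `G α (n+1) = {1 / G α n}`. -/
def G (α : ℝ) : ℕ → ℝ
  | 0 => α
  | n + 1 => Int.fract (G α n)⁻¹

/-- The partial quotients of the regular continued fraction `α = [0; a 1, a 2, …]`
(with the convention `a 0 = 0`). -/
def a (α : ℝ) : ℕ → ℕ
  | 0 => 0
  | n + 1 => ⌊(G α n)⁻¹⌋₊

/-- Denominators of the convergents of the continued fraction of `α`. -/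
def q (α : ℝ) : ℕ → ℕ
  | 0 => 1
  | 1 => a α 1
  | (n + 2) => a α (n + 2) * q α (n + 1) + q α n

/-- Numerators of the convergents of the continued fraction of `α`. -/
def p (α : ℝ) : ℕ → ℕ
  | 0 => 0
  | 1 => 1
  | (n + 2) => a α (n + 2) * p α (n + 1) + p α n

/-- `θ n = q n * α - p n`. -/
def θ (α : ℝ) (n : ℕ) : ℝ := (q α n : ℝ) * α - (p α n : ℝ)

end CF

open CF

/-!
Write an element of the circle as an Ostrowski sum `y = ∑ d k * θ k`, with digits `d` supported on a
set `D` of positions whose gaps tend to infinity. Modulo `1` the terms below `n` of `q n • y` can be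
moved from `θ k` to `θ n`, and the terms far from `n` decay like the inverse of a Fibonacci number,
so `q n • y` is close to `d n * q n * θ n` as soon as `n` has no other element of `D` nearby. As `D`
has density zero, so has the set of `n` within a bounded distance of `D`, and `y` lies in
`t^s_(qₙ)(𝕋)`. If the digits on `D` are about a quarter or a half of the largest admissible one,
then `q n • y` stays away from `0` along `D`. Of two consecutive multiples of `q n • y` one is then
large, so half of the block `q n, 2 * q n, …, a (n + 1) * q n` of the sequence `(xₙ)` is bad, and
these blocks make up a positive proportion of that sequence infinitely often: `y` is not in
`t^s_(xₙ)(𝕋)`. The choice between a quarter and a half can be read off from `q n • y` for large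
`n ∈ D`, so repeating every bit of a binary sequence infinitely often along `D` encodes the sequence
injectively and produces continuum many such `y`.
-/

/-! ### Natural density -/

theorem densityZero_iff_tendsto_ncard_Iio {A : Set ℕ} : DensityZero A ↔
    Tendsto (fun n : ℕ => ((A ∩ Set.Iio n).ncard : ℝ) / n) atTop (𝓝 0) := by
  refine tendsto_iff_of_dist (squeeze_zero (fun _ => dist_nonneg) (fun n => ?_)
    (tendsto_const_div_atTop_nhds_zero_nat (1 : ℝ)))
  have hle : (A ∩ Set.Icc 1 n).ncard ≤ (A ∩ Set.Iio n).ncard + 1 := by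
    refine (Set.ncard_le_ncard (t := insert n (A ∩ Set.Iio n)) ?_).trans (Set.ncard_insert_le _ _)
    rintro k ⟨hk, -, hkn⟩
    exact hkn.eq_or_lt.imp id fun h => ⟨hk, h⟩
  have hge : (A ∩ Set.Iio n).ncard ≤ (A ∩ Set.Icc 1 n).ncard + 1 := by
    refine (Set.ncard_le_ncard (t := insert 0 (A ∩ Set.Icc 1 n)) ?_).trans (Set.ncard_insert_le _ _)
    rintro k ⟨hk, hkn⟩
    exact k.eq_zero_or_pos.imp id fun h => ⟨hk, h, (Set.mem_Iio.1 hkn).le⟩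
  rw [Real.dist_eq, ← sub_div, abs_div, Nat.abs_cast]
  gcongr
  rw [abs_le, sub_le_iff_le_add', neg_le_sub_iff_le_add]
  exact ⟨by exact_mod_cast hge, by exact_mod_cast hle⟩

theorem DensityZero.mono {A B : Set ℕ} (hB : DensityZero B) (h : A ⊆ B) : DensityZero A := by
  refine squeeze_zero (fun n => by positivity) (fun n => ?_) hB
  gcongr
  exact (Set.finite_Icc 1 n).subset Set.inter_subset_right

theorem DensityZero.thicken {A : Set ℕ} (hA : DensityZero A) (L : ℕ) :
    DensityZero {n | ∃ k ∈ A, n ≤ k + L ∧ k ≤ n + L} := by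
  rw [densityZero_iff_tendsto_ncard_Iio] at hA ⊢
  have hcount (n : ℕ) : ({n | ∃ k ∈ A, n ≤ k + L ∧ k ≤ n + L} ∩ Set.Iio n).ncard ≤
      ((A ∩ Set.Iio n).ncard + L) * (2 * L + 1) := by
    have hcover : {n | ∃ k ∈ A, n ≤ k + L ∧ k ≤ n + L} ∩ Set.Iio n ⊆
        (fun z : ℕ × ℕ => z.1 + z.2 - L) ''
          (((A ∩ Set.Iio n) ∪ Set.Ico n (n + L)) ×ˢ Set.Iio (2 * L + 1)) := by
      rintro v ⟨⟨k, hk, hvk, hkv⟩, hvn : v < n⟩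
      refine ⟨(k, v + L - k), ⟨?_, Set.mem_Iio.2 (by omega)⟩, by dsimp only; omega⟩
      exact (lt_or_ge k n).imp (fun h => ⟨hk, h⟩) fun h => ⟨h, by omega⟩
    calc _ ≤ _ := Set.ncard_le_ncard hcover
      _ ≤ _ := Set.ncard_image_le
      _ = ((A ∩ Set.Iio n) ∪ Set.Ico n (n + L)).ncard * (2 * L + 1) := by
        rw [Set.ncard_prod, Set.ncard_Iio_nat]
      _ ≤ _ := by
        gcongr
        exact (Set.ncard_union_le _ _).trans (by simp [Set.ncard_Ico_nat])
  have hlim : Tendsto (fun n : ℕ => (((A ∩ Set.Iio n).ncard : ℝ) / n + L / n) * (2 * L + 1))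
      atTop (𝓝 0) := by
    simpa using (hA.add (tendsto_const_div_atTop_nhds_zero_nat (L : ℝ))).mul_const (2 * L + 1 : ℝ)
  refine squeeze_zero (fun n => by positivity) (fun n => ?_) hlim
  rw [← add_div, div_mul_eq_mul_div]
  gcongr
  exact_mod_cast hcount n

/-- A set of naturals whose consecutive gaps tend to infinity: every element far enough out is
alone in its window of radius `L`. -/
def SparseAtTop (D : Set ℕ) : Prop :=
  ∀ L, ∀ᶠ i in atTop, i ∈ D → ∀ k ∈ D, i ≤ k + L → k ≤ i + L → k = i

theorem SparseAtTop.densityZero {D : Set ℕ} (hD : SparseAtTop D) : DensityZero D := by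
  have hcount (L : ℕ) : ∃ N : ℕ, ∀ n, (D ∩ Set.Iio n).ncard ≤ N + n / (L + 1) := by
    obtain ⟨N, hN⟩ := eventually_atTop.1 (hD L)
    have hinj (n : ℕ) : (D ∩ Set.Ico N n).ncard ≤ n / (L + 1) + 1 := by
      rw [← Set.ncard_Iio_nat (n / (L + 1) + 1)]
      refine Set.ncard_le_ncard_of_injOn (· / (L + 1))
        (fun i hi => Nat.lt_succ_of_le (Nat.div_le_div_right hi.2.2.le)) fun i hi k hk hik => ?_
      have hi_div := Nat.div_add_mod i (L + 1)
      have hk_div := Nat.div_add_mod k (L + 1)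
      have hi_mod : i % (L + 1) < L + 1 := Nat.mod_lt i L.succ_pos
      have hk_mod : k % (L + 1) < L + 1 := Nat.mod_lt k L.succ_pos
      dsimp only at hik
      rw [hik] at hi_div
      exact (hN i hi.2.1 hi.1 k hk.1 (by omega) (by omega)).symm
    refine ⟨N + 1, fun n => ?_⟩
    have hsub : D ∩ Set.Iio n ⊆ Set.Iio N ∪ (D ∩ Set.Ico N n) := fun i hi =>
      (lt_or_ge i N).imp id fun h => ⟨hi.1, h, hi.2⟩
    have hunion := (Set.ncard_le_ncard hsub).trans (Set.ncard_union_le _ _)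
    rw [Set.ncard_Iio_nat] at hunion
    have := hinj n
    omega
  rw [densityZero_iff_tendsto_ncard_Iio, tendsto_order]
  refine ⟨fun ε hε => Eventually.of_forall fun n => hε.trans_le (by positivity), fun ε hε => ?_⟩
  obtain ⟨L, hL⟩ := exists_nat_one_div_lt hε
  obtain ⟨N, hN⟩ := hcount L
  have hlim : Tendsto (fun n : ℕ => (N : ℝ) / n + 1 / (L + 1)) atTop (𝓝 (0 + 1 / (L + 1))) :=
    (tendsto_const_div_atTop_nhds_zero_nat _).add_const _
  rw [zero_add] at hlim
  filter_upwards [hlim.eventually_lt_const hL, eventually_gt_atTop 0] with n hn hpos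
  refine lt_of_le_of_lt ?_ hn
  have hpos' : (0 : ℝ) < n := by exact_mod_cast hpos
  rw [div_add' _ _ _ hpos'.ne', one_div_mul_eq_div]
  gcongr
  calc ((D ∩ Set.Iio n).ncard : ℝ) ≤ N + (n / (L + 1) : ℕ) := by exact_mod_cast hN n
    _ ≤ N + n / (L + 1) := by
      gcongr
      exact_mod_cast Nat.cast_div_le (α := ℝ) (m := n) (n := L + 1)

/-- If `r • z` is small, then `(r - 1) • z` is not. -/
theorem le_two_mul_card_le_norm_nsmul {E : Type*} [SeminormedAddCommGroup E] {z : E} {δ : ℝ}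
    (hz : 2 * δ ≤ ‖z‖) (b : ℕ) : b ≤ 2 * {r ∈ Finset.Icc 1 b | δ ≤ ‖r • z‖}.card := by
  have hsmall : {r ∈ Finset.Icc 1 b | ¬ δ ≤ ‖r • z‖}.card ≤
      {r ∈ Finset.Icc 1 b | δ ≤ ‖r • z‖}.card := by
    refine Finset.card_le_card_of_injOn (· - 1) (fun r hr => ?_) fun r hr r' hr' h => ?_
    · obtain ⟨hrb, hr_small⟩ := Finset.mem_filter.1 hr
      obtain ⟨k, rfl⟩ := Nat.exists_eq_add_of_le' (Finset.mem_Icc.1 hrb).1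
      have htri := norm_le_norm_add_norm_sub' z ((k + 1) • z)
      rw [succ_nsmul, sub_add_cancel_right, norm_neg, ← succ_nsmul] at htri
      have hk : k ≠ 0 := by
        rintro rfl
        rw [zero_add, one_smul] at hr_small
        linarith [norm_nonneg z]
      have := Finset.mem_Icc.1 hrb
      exact Finset.mem_filter.2 ⟨Finset.mem_Icc.2 (by simp only; omega), by
        simp only [add_tsub_cancel_right]; linarith⟩
    · have := (Finset.mem_Icc.1 (Finset.mem_filter.1 hr).1).1
      have := (Finset.mem_Icc.1 (Finset.mem_filter.1 hr').1).1
      dsimp only at h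
      omega
  have hadd := Finset.card_filter_add_card_filter_not (s := Finset.Icc 1 b)
    (fun r : ℕ => δ ≤ ‖r • z‖)
  rw [Nat.card_Icc] at hadd
  omega

theorem ncard_inter_range_inter_Iio {x : ℕ → ℕ} (hx : StrictMono x) (A : Set ℕ) (n : ℕ) :
    ((A ∩ Set.range x) ∩ Set.Iio (x n)).ncard = (x ⁻¹' A ∩ Set.Iio n).ncard := by
  have himage : x '' (x ⁻¹' A ∩ Set.Iio n) = (A ∩ Set.range x) ∩ Set.Iio (x n) := by
    ext v
    constructor
    · rintro ⟨k, ⟨hk, hkn⟩, rfl⟩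
      exact ⟨⟨hk, k, rfl⟩, hx hkn⟩
    · rintro ⟨⟨hv, k, rfl⟩, hlt⟩
      exact ⟨k, ⟨hv, hx.lt_iff_lt.1 hlt⟩, rfl⟩
  rw [← himage, Set.ncard_image_of_injective _ hx.injective]

theorem exists_frequently_mem_and_eq {D : Set ℕ} (hD : D.Infinite) :
    ∃ e : ℕ → ℕ, ∀ k, ∃ᶠ n in atTop, n ∈ D ∧ e n = k := by
  classical
  refine ⟨fun n => (Nat.count (· ∈ D) n).unpair.1, fun k => frequently_atTop.2 fun N => ?_⟩
  refine ⟨Nat.nth (· ∈ D) (Nat.pair k N), ?_, Nat.nth_mem_of_infinite hD _, ?_⟩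
  · exact (Nat.right_le_pair k N).trans (Nat.le_nth fun h => absurd h hD)
  · dsimp only
    rw [Nat.count_nth_of_infinite (p := (· ∈ D)) hD, Nat.unpair_pair]

/-! ### Convergents and Ostrowski sums -/

theorem tendsto_fib_atTop : Tendsto Nat.fib atTop atTop :=
  tendsto_atTop_mono' _ ((eventually_ge_atTop 5).mono fun _ => Nat.le_fib_self) tendsto_id

theorem Circle1.norm_coe_le_abs (y : ℝ) : ‖(y : Circle1)‖ ≤ |y| :=
  QuotientAddGroup.norm_mk_le_norm

theorem Circle1.norm_coe_eq_abs {y : ℝ} (hy : |y| ≤ 1 / 2) : ‖(y : Circle1)‖ = |y| :=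
  (AddCircle.norm_coe_eq_abs_iff (1 : ℝ) one_ne_zero).2 (by rwa [abs_one])

namespace CF

variable {α : ℝ}

theorem irrational_G (hirr : Irrational α) (n : ℕ) : Irrational (G α n) := by
  induction n with
  | zero => exact hirr
  | succ n ih =>
    have h : G α (n + 1) = (G α n)⁻¹ - (⌊(G α n)⁻¹⌋ : ℝ) := rfl
    rwa [h, irrational_sub_intCast_iff, irrational_inv_iff]

theorem G_mem_Ioo (hα : α ∈ Set.Ioo (0 : ℝ) 1) (hirr : Irrational α) (n : ℕ) :
    G α n ∈ Set.Ioo (0 : ℝ) 1 := by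
  cases n with
  | zero => exact hα
  | succ n =>
    exact ⟨(Int.fract_nonneg _).lt_of_ne' (irrational_G hirr (n + 1)).ne_zero, Int.fract_lt_one _⟩

theorem G_succ (hG : ∀ n, G α n ∈ Set.Ioo (0 : ℝ) 1) (n : ℕ) :
    G α (n + 1) = (G α n)⁻¹ - a α (n + 1) := by
  change Int.fract (G α n)⁻¹ = (G α n)⁻¹ - (⌊(G α n)⁻¹⌋₊ : ℝ)
  rw [Int.fract, natCast_floor_eq_intCast_floor (inv_nonneg.2 (hG n).1.le)]

theorem one_le_a_succ (hG : ∀ n, G α n ∈ Set.Ioo (0 : ℝ) 1) (n : ℕ) : 1 ≤ a α (n + 1) := by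
  change 1 ≤ ⌊(G α n)⁻¹⌋₊
  rw [Nat.one_le_floor_iff]
  exact (one_le_inv₀ (hG n).1).2 (hG n).2.le

theorem q_succ_succ (n : ℕ) : q α (n + 2) = a α (n + 2) * q α (n + 1) + q α n := rfl

theorem q_le_q_succ (hG : ∀ n, G α n ∈ Set.Ioo (0 : ℝ) 1) (n : ℕ) : q α n ≤ q α (n + 1) := by
  cases n with
  | zero => exact one_le_a_succ hG 0
  | succ n => exact (Nat.le_mul_of_pos_left _ (one_le_a_succ hG (n + 1))).trans le_self_add

theorem monotone_q (hG : ∀ n, G α n ∈ Set.Ioo (0 : ℝ) 1) : Monotone (q α) :=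
  monotone_nat_of_le_succ (q_le_q_succ hG)

theorem q_pos (hG : ∀ n, G α n ∈ Set.Ioo (0 : ℝ) 1) (n : ℕ) : 0 < q α n :=
  Nat.one_pos.trans_le (monotone_q hG n.zero_le)

theorem a_mul_q_le_q_succ (n : ℕ) : a α (n + 1) * q α n ≤ q α (n + 1) := by
  cases n with
  | zero => exact (mul_one _).le
  | succ n => exact le_self_add

theorem a_mul_q_lt_q_succ (hG : ∀ n, G α n ∈ Set.Ioo (0 : ℝ) 1) {n : ℕ} (hn : n ≠ 0) :
    a α (n + 1) * q α n < q α (n + 1) := by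
  obtain ⟨k, rfl⟩ := Nat.exists_eq_succ_of_ne_zero hn
  exact Nat.lt_add_of_pos_right (q_pos hG k)

theorem q_succ_le (hG : ∀ n, G α n ∈ Set.Ioo (0 : ℝ) 1) (n : ℕ) :
    q α (n + 1) ≤ (a α (n + 1) + 1) * q α n := by
  cases n with
  | zero => simp [q]
  | succ n =>
    rw [q_succ_succ, add_mul, one_mul]
    exact Nat.add_le_add_left (q_le_q_succ hG n) _

theorem fib_succ_mul_q_le (hG : ∀ n, G α n ∈ Set.Ioo (0 : ℝ) 1) (n L : ℕ) :
    Nat.fib (L + 1) * q α n ≤ q α (n + L) := by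
  induction L using Nat.twoStepInduction with
  | zero => simp
  | one => simpa using q_le_q_succ hG n
  | more L ih ih' =>
    calc Nat.fib (L + 3) * q α n = Nat.fib (L + 2) * q α n + Nat.fib (L + 1) * q α n := by
          rw [Nat.fib_add_two]; ring
      _ ≤ q α (n + L + 1) + q α (n + L) := add_le_add ih' ih
      _ ≤ a α (n + L + 2) * q α (n + L + 1) + q α (n + L) := by
          gcongr
          exact Nat.le_mul_of_pos_left _ (one_le_a_succ hG _)

theorem tendsto_q_atTop (hG : ∀ n, G α n ∈ Set.Ioo (0 : ℝ) 1) : Tendsto (q α) atTop atTop :=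
  tendsto_atTop_mono (fun n => by simpa [q] using fib_succ_mul_q_le hG 0 n)
    (tendsto_fib_atTop.comp (tendsto_add_atTop_nat 1))

theorem θ_succ_succ (n : ℕ) : θ α (n + 2) = a α (n + 2) * θ α (n + 1) + θ α n := by
  simp only [θ, q, p]
  push_cast
  ring

theorem θ_succ (hG : ∀ n, G α n ∈ Set.Ioo (0 : ℝ) 1) (n : ℕ) :
    θ α (n + 1) = -(θ α n * G α (n + 1)) := by
  induction n with
  | zero =>
    have hα : α ≠ 0 := (hG 0).1.ne'
    rw [G_succ hG]
    simp only [θ, q, p, G]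
    push_cast
    field_simp
    ring
  | succ n ih =>
    have hG_ne : G α (n + 1) ≠ 0 := (hG (n + 1)).1.ne'
    have hθ : θ α n = -(θ α (n + 1) * (G α (n + 1))⁻¹) := by
      rw [ih]; field_simp
    rw [θ_succ_succ, G_succ hG (n + 1), hθ]
    ring

theorem abs_θ_succ (hG : ∀ n, G α n ∈ Set.Ioo (0 : ℝ) 1) (n : ℕ) :
    |θ α (n + 1)| = |θ α n| * G α (n + 1) := by
  rw [θ_succ hG, abs_neg, abs_mul, abs_of_pos (hG _).1]

theorem abs_θ_succ_le (hG : ∀ n, G α n ∈ Set.Ioo (0 : ℝ) 1) (n : ℕ) :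
    |θ α (n + 1)| ≤ |θ α n| := by
  rw [abs_θ_succ hG]
  exact mul_le_of_le_one_right (abs_nonneg _) (hG _).2.le

theorem abs_θ_eq_a_mul_add (hG : ∀ n, G α n ∈ Set.Ioo (0 : ℝ) 1) (n : ℕ) :
    |θ α n| = a α (n + 2) * |θ α (n + 1)| + |θ α (n + 2)| := by
  have hG_ne : G α (n + 1) ≠ 0 := (hG (n + 1)).1.ne'
  rw [abs_θ_succ hG (n + 1), G_succ hG (n + 1), abs_θ_succ hG n]
  field_simp
  ring

theorem q_succ_mul_abs_θ_add (hG : ∀ n, G α n ∈ Set.Ioo (0 : ℝ) 1) (n : ℕ) :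
    q α (n + 1) * |θ α n| + q α n * |θ α (n + 1)| = 1 := by
  induction n with
  | zero =>
    have hα : 0 < α := (hG 0).1
    have hθ : |θ α 0| = α := by simp [θ, q, p, abs_of_pos hα]
    rw [abs_θ_succ hG, G_succ hG, hθ]
    simp only [q, G]
    push_cast
    field_simp
    ring
  | succ n ih =>
    rw [abs_θ_eq_a_mul_add hG] at ih
    rw [q_succ_succ]
    push_cast
    linarith

theorem q_succ_mul_abs_θ_le_one (hG : ∀ n, G α n ∈ Set.Ioo (0 : ℝ) 1) (n : ℕ) :
    q α (n + 1) * |θ α n| ≤ 1 := by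
  rw [← q_succ_mul_abs_θ_add hG n]
  exact le_add_of_nonneg_right (by positivity)

theorem q_mul_abs_θ_le_one (hG : ∀ n, G α n ∈ Set.Ioo (0 : ℝ) 1) (n : ℕ) :
    q α n * |θ α n| ≤ 1 := by
  refine le_trans ?_ (q_succ_mul_abs_θ_le_one hG n)
  gcongr
  exact q_le_q_succ hG n

theorem a_mul_q_mul_abs_θ_le_one (hG : ∀ n, G α n ∈ Set.Ioo (0 : ℝ) 1) (n : ℕ) :
    a α (n + 1) * (q α n * |θ α n|) ≤ 1 := by
  rw [← mul_assoc]
  refine le_trans ?_ (q_succ_mul_abs_θ_le_one hG n)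
  gcongr
  exact_mod_cast a_mul_q_le_q_succ n

theorem one_le_a_add_two_mul_q_mul_abs_θ (hG : ∀ n, G α n ∈ Set.Ioo (0 : ℝ) 1) (n : ℕ) :
    1 ≤ (a α (n + 1) + 2) * (q α n * |θ α n|) := by
  have hq : (q α (n + 1) : ℝ) ≤ (a α (n + 1) + 1) * q α n := by exact_mod_cast q_succ_le hG n
  calc 1 = q α (n + 1) * |θ α n| + q α n * |θ α (n + 1)| := (q_succ_mul_abs_θ_add hG n).symm
    _ ≤ (a α (n + 1) + 1) * q α n * |θ α n| + q α n * |θ α n| := by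
        gcongr ?_ * _ + _ * ?_
        exact abs_θ_succ_le hG n
    _ = (a α (n + 1) + 2) * (q α n * |θ α n|) := by ring

/-- The sum of the series `∑ d k * θ k` with digits `d`; for admissible digits this is the
Ostrowski expansion of a real number to the base `α`. -/
def ostrowskiSum (α : ℝ) (d : ℕ → ℕ) : ℝ := ∑' k, d k * θ α k

theorem sum_digits_mul_q_le {d : ℕ → ℕ} (hG : ∀ n, G α n ∈ Set.Ioo (0 : ℝ) 1)
    (hd : ∀ k, d k ≤ a α (k + 1)) (n : ℕ) :
    ∑ k ∈ Finset.range n, d k * q α k ≤ 2 * q α n := by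
  have hsucc (n : ℕ) : ∑ k ∈ Finset.range (n + 1), d k * q α k ≤ q α (n + 1) + q α n := by
    induction n with
    | zero => simpa [q] using (hd 0).trans le_self_add
    | succ n ih =>
      rw [Finset.sum_range_succ, q_succ_succ]
      have := Nat.mul_le_mul_right (q α (n + 1)) (hd (n + 1))
      linarith
  cases n with
  | zero => simp
  | succ n =>
    have := hsucc n
    have := q_le_q_succ hG n
    linarith

theorem sum_digits_mul_abs_θ_le {d : ℕ → ℕ} (hG : ∀ n, G α n ∈ Set.Ioo (0 : ℝ) 1)
    (hd : ∀ k, d k ≤ a α (k + 1)) (n j : ℕ) :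
    ∑ k ∈ Finset.range j, d (k + (n + 1)) * |θ α (k + (n + 1))| ≤ 2 * |θ α n| := by
  have htelescope : ∑ k ∈ Finset.range j, d (k + (n + 1)) * |θ α (k + (n + 1))| +
      (|θ α (n + j)| + |θ α (n + j + 1)|) ≤ |θ α n| + |θ α (n + 1)| := by
    induction j with
    | zero => simp
    | succ j ih =>
      have hdigit : (d (n + j + 1) : ℝ) * |θ α (n + j + 1)| ≤
          a α (n + j + 2) * |θ α (n + j + 1)| := by
        gcongr
        exact hd _
      rw [abs_θ_eq_a_mul_add hG (n + j)] at ih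
      rw [Finset.sum_range_succ, show j + (n + 1) = n + j + 1 by ring, ← add_assoc n j 1]
      linarith
  have := abs_θ_succ_le hG n
  have := abs_nonneg (θ α (n + j))
  have := abs_nonneg (θ α (n + j + 1))
  linarith

theorem summable_digits_mul_abs_θ {d : ℕ → ℕ} (hG : ∀ n, G α n ∈ Set.Ioo (0 : ℝ) 1)
    (hd : ∀ k, d k ≤ a α (k + 1)) : Summable fun k => d k * |θ α k| :=
  (summable_nat_add_iff 1).1 (summable_of_sum_range_le (fun _ => by positivity)
    (sum_digits_mul_abs_θ_le hG hd 0))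

theorem abs_ostrowskiSum_sub_sum_range_le {d : ℕ → ℕ} (hG : ∀ n, G α n ∈ Set.Ioo (0 : ℝ) 1)
    (hd : ∀ k, d k ≤ a α (k + 1)) (n : ℕ) :
    |ostrowskiSum α d - ∑ k ∈ Finset.range (n + 1), d k * θ α k| ≤ 2 * |θ α n| := by
  set f : ℕ → ℝ := fun k => d k * θ α k with hf
  have hnorm (k : ℕ) : ‖f k‖ = d k * |θ α k| := by
    rw [hf, Real.norm_eq_abs, abs_mul, Nat.abs_cast]
  have hsummable : Summable fun k => ‖f k‖ := by
    simpa only [hnorm] using summable_digits_mul_abs_θ hG hd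
  have htail : ostrowskiSum α d - ∑ k ∈ Finset.range (n + 1), f k = ∑' k, f (k + (n + 1)) :=
    sub_eq_iff_eq_add'.2 (hsummable.of_norm.sum_add_tsum_nat_add (n + 1)).symm
  calc |ostrowskiSum α d - ∑ k ∈ Finset.range (n + 1), f k|
      = ‖∑' k, f (k + (n + 1))‖ := by rw [htail, Real.norm_eq_abs]
    _ ≤ ∑' k, ‖f (k + (n + 1))‖ :=
        norm_tsum_le_tsum_norm ((summable_nat_add_iff (f := fun k => ‖f k‖) (n + 1)).2 hsummable)
    _ ≤ 2 * |θ α n| := by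
        simp only [hnorm]
        exact Real.tsum_le_of_sum_range_le (fun _ => by positivity)
          (sum_digits_mul_abs_θ_le hG hd n)

/-- Modulo `1`, the terms below `n` can be moved from `θ k` to `θ n`, because
`q n * θ k - q k * θ n` is an integer. -/
theorem coe_q_mul_sum_θ (d : ℕ → ℕ) (m n : ℕ) :
    ((q α n * ∑ k ∈ Finset.range m, d k * θ α k : ℝ) : Circle1) =
      (((∑ k ∈ Finset.range m, d k * q α k : ℕ) * θ α n : ℝ) : Circle1) := by
  rw [← sub_eq_zero, ← AddCircle.coe_sub, AddCircle.coe_eq_zero_iff]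
  refine ⟨∑ k ∈ Finset.range m, (d k : ℤ) * (q α k * p α n - q α n * p α k), ?_⟩
  push_cast
  rw [zsmul_one, Finset.mul_sum, Finset.sum_mul, ← Finset.sum_sub_distrib]
  push_cast
  refine Finset.sum_congr rfl fun k _ => ?_
  simp only [θ]
  ring

theorem q_smul_coe_sub_digit (d : ℕ → ℕ) (y : ℝ) (n : ℕ) :
    (q α n : ℤ) • (y : Circle1) - ((d n * (q α n * θ α n) : ℝ) : Circle1) =
      (((∑ k ∈ Finset.range n, d k * q α k : ℕ) * θ α n +
        q α n * (y - ∑ k ∈ Finset.range (n + 1), d k * θ α k) : ℝ) : Circle1) := by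
  rw [AddCircle.coe_add, ← coe_q_mul_sum_θ, ← AddCircle.coe_zsmul, ← AddCircle.coe_sub,
    ← AddCircle.coe_add, zsmul_eq_mul, Int.cast_natCast, Finset.sum_range_succ]
  congr 1
  ring

theorem fib_mul_sum_digits_mul_q_le {d : ℕ → ℕ} (hG : ∀ n, G α n ∈ Set.Ioo (0 : ℝ) 1)
    (hd : ∀ k, d k ≤ a α (k + 1)) {n L : ℕ} (hzero : ∀ k < n, n ≤ k + L → d k = 0) :
    Nat.fib (L + 1) * ∑ k ∈ Finset.range n, d k * q α k ≤ 2 * q α n := by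
  have hsum : ∑ k ∈ Finset.range (n - L), d k * q α k = ∑ k ∈ Finset.range n, d k * q α k := by
    refine Finset.sum_subset (Finset.range_mono (Nat.sub_le n L)) fun k hk hk' => ?_
    rw [Finset.mem_range] at hk hk'
    rw [hzero k hk (by omega), zero_mul]
  rw [← hsum]
  rcases le_total L n with hL | hL
  · calc _ ≤ Nat.fib (L + 1) * (2 * q α (n - L)) := by
          gcongr
          exact sum_digits_mul_q_le hG hd _
      _ = 2 * (Nat.fib (L + 1) * q α (n - L)) := by ring
      _ ≤ 2 * q α n := by
          gcongr
          simpa only [Nat.sub_add_cancel hL] using fib_succ_mul_q_le hG (n - L) L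
  · simp [Nat.sub_eq_zero_of_le hL]

theorem fib_mul_q_mul_abs_ostrowskiSum_sub_le {d : ℕ → ℕ}
    (hG : ∀ n, G α n ∈ Set.Ioo (0 : ℝ) 1) (hd : ∀ k, d k ≤ a α (k + 1)) {n L : ℕ}
    (hzero : ∀ k, n < k → k ≤ n + L → d k = 0) :
    Nat.fib (L + 1) * (q α n * |ostrowskiSum α d - ∑ k ∈ Finset.range (n + 1), d k * θ α k|) ≤
      2 := by
  have hsum : ∑ k ∈ Finset.range (n + 1), d k * θ α k =
      ∑ k ∈ Finset.range (n + L + 1), d k * θ α k := by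
    refine Finset.sum_subset (Finset.range_mono (by omega)) fun k hk hk' => ?_
    rw [Finset.mem_range] at hk hk'
    rw [hzero k (by omega) (by omega), Nat.cast_zero, zero_mul]
  have hfib : (Nat.fib (L + 1) * q α n : ℝ) ≤ q α (n + L) := by
    exact_mod_cast fib_succ_mul_q_le hG n L
  rw [hsum, ← mul_assoc]
  calc _ ≤ q α (n + L) * (2 * |θ α (n + L)|) := by
        gcongr
        exact abs_ostrowskiSum_sub_sum_range_le hG hd (n + L)
    _ = 2 * (q α (n + L) * |θ α (n + L)|) := by ring
    _ ≤ 2 := by linarith [q_mul_abs_θ_le_one hG (n + L)]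

theorem norm_q_smul_ostrowskiSum_sub_le {d : ℕ → ℕ} (hG : ∀ n, G α n ∈ Set.Ioo (0 : ℝ) 1)
    (hd : ∀ k, d k ≤ a α (k + 1)) {n L : ℕ}
    (hzero : ∀ k, k ≠ n → n ≤ k + L → k ≤ n + L → d k = 0) :
    ‖(q α n : ℤ) • (ostrowskiSum α d : Circle1) - ((d n * (q α n * θ α n) : ℝ) : Circle1)‖ ≤
      4 / Nat.fib (L + 1) := by
  have hbelow : (Nat.fib (L + 1) * (∑ k ∈ Finset.range n, d k * q α k : ℕ) : ℝ) ≤ 2 * q α n := by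
    exact_mod_cast fib_mul_sum_digits_mul_q_le hG hd fun k hk hkL => hzero k hk.ne hkL (by omega)
  have habove := fib_mul_q_mul_abs_ostrowskiSum_sub_le hG hd (n := n) (L := L)
    fun k hk hkL => hzero k hk.ne' (by omega) hkL
  have hfib : (0 : ℝ) < Nat.fib (L + 1) := by exact_mod_cast Nat.fib_pos.2 L.succ_pos
  rw [q_smul_coe_sub_digit, le_div_iff₀' hfib]
  generalize ∑ k ∈ Finset.range n, d k * q α k = P at *
  generalize ostrowskiSum α d - ∑ k ∈ Finset.range (n + 1), d k * θ α k = R at *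
  calc Nat.fib (L + 1) * ‖((P * θ α n + q α n * R : ℝ) : Circle1)‖
      ≤ Nat.fib (L + 1) * (|P * θ α n| + |q α n * R|) := by
        gcongr
        exact (Circle1.norm_coe_le_abs _).trans (abs_add_le _ _)
    _ = Nat.fib (L + 1) * P * |θ α n| + Nat.fib (L + 1) * (q α n * |R|) := by
        rw [abs_mul, abs_mul, Nat.abs_cast, Nat.abs_cast]; ring
    _ ≤ 2 * q α n * |θ α n| + 2 := by gcongr
    _ ≤ 4 := by linarith [q_mul_abs_θ_le_one hG n]

theorem tendsto_div_fib_succ (C : ℝ) :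
    Tendsto (fun L : ℕ => C / (Nat.fib (L + 1) : ℝ)) atTop (𝓝 0) :=
  (tendsto_const_div_atTop_nhds_zero_nat C).comp
    (tendsto_fib_atTop.comp (tendsto_add_atTop_nat 1))

theorem ostrowskiSum_mem_statCharSet_q {d : ℕ → ℕ} (hG : ∀ n, G α n ∈ Set.Ioo (0 : ℝ) 1)
    (hd : ∀ k, d k ≤ a α (k + 1)) (hsupp : DensityZero (Function.support d)) :
    (ostrowskiSum α d : Circle1) ∈ statCharSet (fun n => (q α n : ℤ)) := by
  intro ε hε
  obtain ⟨L, hL⟩ := ((tendsto_div_fib_succ 4).eventually_lt_const hε).exists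
  refine (hsupp.thicken L).mono fun n (hn : ε ≤ _) => ?_
  by_contra hfar
  have hzero (k : ℕ) (hnk : n ≤ k + L) (hkn : k ≤ n + L) : d k = 0 := by
    by_contra hk
    exact hfar ⟨k, hk, hnk, hkn⟩
  have hnorm := norm_q_smul_ostrowskiSum_sub_le hG hd fun k _ => hzero k
  rw [hzero n le_self_add le_self_add, Nat.cast_zero, zero_mul, AddCircle.coe_zero,
    sub_zero] at hnorm
  linarith

/-! ### Digits encoding a binary sequence -/

/-- The digits that write the bits of `s` at the positions in `D`: about a quarter of the largest
admissible digit for `false`, about half of it for `true`. -/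
def bitDigits (α : ℝ) (D : Set ℕ) (s : ℕ → Bool) : ℕ → ℕ :=
  D.indicator fun k => ((s k).toNat + 1) * (a α (k + 1) / 4)

theorem bitDigits_of_mem {D : Set ℕ} {n : ℕ} (s : ℕ → Bool) (hn : n ∈ D) :
    bitDigits α D s n = ((s n).toNat + 1) * (a α (n + 1) / 4) :=
  Set.indicator_of_mem hn _

theorem bitDigits_le (D : Set ℕ) (s : ℕ → Bool) (k : ℕ) : bitDigits α D s k ≤ a α (k + 1) := by
  refine Set.indicator_apply_le' (fun _ => ?_) fun _ => Nat.zero_le _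
  calc ((s k).toNat + 1) * (a α (k + 1) / 4) ≤ 2 * (a α (k + 1) / 4) := by
        gcongr
        exact Nat.succ_le_succ (s k).toNat_le
    _ ≤ a α (k + 1) := by omega

theorem abs_quarter_a_mul_q_mul_θ_mem_Icc (hG : ∀ n, G α n ∈ Set.Ioo (0 : ℝ) 1) {n : ℕ}
    (ha : 4 ≤ a α (n + 1)) :
    |(a α (n + 1) / 4 : ℕ) * (q α n * θ α n)| ∈ Set.Icc (1 / 9 : ℝ) (1 / 4) := by
  have hupper := a_mul_q_mul_abs_θ_le_one hG n
  have hlower := one_le_a_add_two_mul_q_mul_abs_θ hG n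
  have hc_upper : (4 * (a α (n + 1) / 4 : ℕ) : ℝ) ≤ a α (n + 1) := by
    exact_mod_cast Nat.mul_div_le _ 4
  have hc_lower : (a α (n + 1) + 2 : ℝ) ≤ 9 * (a α (n + 1) / 4 : ℕ) := by
    norm_cast
    omega
  rw [abs_mul, abs_mul, Nat.abs_cast, Nat.abs_cast]
  have ht : 0 ≤ q α n * |θ α n| := by positivity
  have := mul_le_mul_of_nonneg_right hc_upper ht
  have := mul_le_mul_of_nonneg_right hc_lower ht
  constructor <;> linarith

theorem one_ninth_le_norm_coe_bitDigits {D : Set ℕ} {n : ℕ} (s : ℕ → Bool)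
    (hG : ∀ n, G α n ∈ Set.Ioo (0 : ℝ) 1) (ha : 4 ≤ a α (n + 1)) (hn : n ∈ D) :
    1 / 9 ≤ ‖((bitDigits α D s n * (q α n * θ α n) : ℝ) : Circle1)‖ := by
  obtain ⟨hlower, hupper⟩ := abs_quarter_a_mul_q_mul_θ_mem_Icc hG ha
  rw [bitDigits_of_mem s hn, Nat.cast_mul, mul_assoc]
  generalize ((a α (n + 1) / 4 : ℕ) : ℝ) * (q α n * θ α n) = u at *
  have habs : |((s n).toNat + 1 : ℕ) * u| = ((s n).toNat + 1 : ℕ) * |u| := by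
    rw [abs_mul, Nat.abs_cast]
  rw [Circle1.norm_coe_eq_abs] <;> rw [habs] <;> cases s n <;>
    simp only [Bool.toNat_false, Bool.toNat_true] <;> push_cast <;> linarith

theorem one_ninth_le_norm_coe_bitDigits_sub {D : Set ℕ} {n : ℕ} {s s' : ℕ → Bool}
    (hG : ∀ n, G α n ∈ Set.Ioo (0 : ℝ) 1) (ha : 4 ≤ a α (n + 1)) (hn : n ∈ D)
    (hss' : s n ≠ s' n) :
    1 / 9 ≤ ‖((bitDigits α D s n * (q α n * θ α n) : ℝ) : Circle1) -
      ((bitDigits α D s' n * (q α n * θ α n) : ℝ) : Circle1)‖ := by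
  obtain ⟨hlower, hupper⟩ := abs_quarter_a_mul_q_mul_θ_mem_Icc hG ha
  rw [bitDigits_of_mem s hn, bitDigits_of_mem s' hn, ← AddCircle.coe_sub, Nat.cast_mul,
    Nat.cast_mul, mul_assoc, mul_assoc]
  generalize ((a α (n + 1) / 4 : ℕ) : ℝ) * (q α n * θ α n) = u at *
  have habs : |((s n).toNat + 1 : ℕ) * u - ((s' n).toNat + 1 : ℕ) * u| = |u| := by
    rw [← sub_mul, abs_mul]
    generalize s n = b at *
    generalize s' n = b' at *
    cases b <;> cases b' <;> first | exact absurd rfl hss' | norm_num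
  rw [Circle1.norm_coe_eq_abs] <;> rw [habs] <;> linarith

theorem eventually_norm_q_smul_sub_bitDigits_lt {D : Set ℕ}
    (hG : ∀ n, G α n ∈ Set.Ioo (0 : ℝ) 1) (hD : SparseAtTop D) (s : ℕ → Bool) {ε : ℝ}
    (hε : 0 < ε) :
    ∀ᶠ n in atTop, n ∈ D → ‖(q α n : ℤ) • (ostrowskiSum α (bitDigits α D s) : Circle1) -
      ((bitDigits α D s n * (q α n * θ α n) : ℝ) : Circle1)‖ < ε := by
  obtain ⟨L, hL⟩ := ((tendsto_div_fib_succ 4).eventually_lt_const hε).exists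
  filter_upwards [hD L] with n hn hnD
  refine (norm_q_smul_ostrowskiSum_sub_le hG (bitDigits_le D s) fun k hk hnk hkn => ?_).trans_lt hL
  exact Set.indicator_of_notMem (fun hkD => hk (hn hnD k hkD hnk hkn)) _

theorem eventually_le_norm_q_smul_ostrowskiSum {D : Set ℕ}
    (hG : ∀ n, G α n ∈ Set.Ioo (0 : ℝ) 1) (hD : SparseAtTop D)
    (ha : ∀ n ∈ D, 4 ≤ a α (n + 1)) (s : ℕ → Bool) :
    ∀ᶠ n in atTop, n ∈ D →
      1 / 10 ≤ ‖(q α n : ℤ) • (ostrowskiSum α (bitDigits α D s) : Circle1)‖ := by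
  filter_upwards [eventually_norm_q_smul_sub_bitDigits_lt hG hD s
    (show (0 : ℝ) < 1 / 90 by norm_num)] with n hn hnD
  have hclose := hn hnD
  have hlarge := one_ninth_le_norm_coe_bitDigits s hG (ha n hnD) hnD
  have := norm_le_norm_add_norm_sub ((q α n : ℤ) • (ostrowskiSum α (bitDigits α D s) : Circle1))
    ((bitDigits α D s n * (q α n * θ α n) : ℝ) : Circle1)
  linarith

theorem eventually_bit_eq_of_ostrowskiSum_eq {D : Set ℕ} {s s' : ℕ → Bool}
    (hG : ∀ n, G α n ∈ Set.Ioo (0 : ℝ) 1) (hD : SparseAtTop D)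
    (ha : ∀ n ∈ D, 4 ≤ a α (n + 1))
    (h : (ostrowskiSum α (bitDigits α D s) : Circle1) = ostrowskiSum α (bitDigits α D s')) :
    ∀ᶠ n in atTop, n ∈ D → s n = s' n := by
  have hε : (0 : ℝ) < 1 / 18 := by norm_num
  filter_upwards [eventually_norm_q_smul_sub_bitDigits_lt hG hD s hε,
    eventually_norm_q_smul_sub_bitDigits_lt hG hD s' hε] with n hn hn' hnD
  by_contra hss'
  have hclose := hn hnD
  have hclose' := hn' hnD
  have hapart := one_ninth_le_norm_coe_bitDigits_sub hG (ha n hnD) hnD hss'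
  rw [norm_sub_rev, h] at hclose
  have := norm_sub_le_norm_sub_add_norm_sub
    ((bitDigits α D s n * (q α n * θ α n) : ℝ) : Circle1)
    ((q α n : ℤ) • (ostrowskiSum α (bitDigits α D s') : Circle1))
    ((bitDigits α D s' n * (q α n * θ α n) : ℝ) : Circle1)
  linarith

/-! ### Large multiples in the blocks -/

/-- The integers `r * q n` with `1 ≤ r ≤ a (n + 1)`, whose increasing enumeration is the sequence
`(xₙ)` of the paper. -/
def blockMultiples (α : ℝ) : Set ℕ :=
  {m | ∃ n r : ℕ, 1 ≤ r ∧ r ≤ a α (n + 1) ∧ m = r * q α n}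

theorem q_mem_blockMultiples (hG : ∀ n, G α n ∈ Set.Ioo (0 : ℝ) 1) (n : ℕ) :
    q α n ∈ blockMultiples α :=
  ⟨n, 1, le_rfl, one_le_a_succ hG n, (one_mul _).symm⟩

theorem ncard_blockMultiples_inter_Iio_le (hG : ∀ n, G α n ∈ Set.Ioo (0 : ℝ) 1) (n : ℕ) :
    (blockMultiples α ∩ Set.Iio (q α n)).ncard ≤ ∑ i ∈ Finset.range n, a α (i + 1) := by
  have hcover : blockMultiples α ∩ Set.Iio (q α n) ⊆
      ((Finset.range n).biUnion fun i => (Finset.Icc 1 (a α (i + 1))).image (· * q α i) :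
        Finset ℕ) := by
    rintro v ⟨⟨i, r, hr, hra, rfl⟩, hlt : r * q α i < q α n⟩
    have hin : i < n := (monotone_q hG).reflect_lt ((Nat.le_mul_of_pos_left _ hr).trans_lt hlt)
    exact Finset.mem_coe.2 (Finset.mem_biUnion.2 ⟨i, Finset.mem_range.2 hin,
      Finset.mem_image_of_mem _ (Finset.mem_Icc.2 ⟨hr, hra⟩)⟩)
  refine (Set.ncard_le_ncard hcover (Finset.finite_toSet _)).trans ?_
  rw [Set.ncard_coe_finset]
  refine Finset.card_biUnion_le.trans (Finset.sum_le_sum fun i _ => Finset.card_image_le.trans ?_)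
  rw [Nat.card_Icc, Nat.add_sub_cancel]

/-- The blocks are disjoint except that block `0` meets block `1`: its last element `a 1 * q 0` is
`q 1`. -/
theorem sum_a_le_two_mul_ncard_blockMultiples (hG : ∀ n, G α n ∈ Set.Ioo (0 : ℝ) 1)
    {y : Circle1} {δ : ℝ} {n : ℕ} {F : Finset ℕ}
    (hF : ∀ i ∈ F, i ≠ 0 ∧ i < n ∧ 2 * δ ≤ ‖(q α i : ℤ) • y‖) :
    ∑ i ∈ F, a α (i + 1) ≤
      2 * (({v : ℕ | δ ≤ ‖(v : ℤ) • y‖} ∩ blockMultiples α) ∩ Set.Iio (q α n)).ncard := by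
  set R : ℕ → Finset ℕ := fun i =>
    {r ∈ Finset.Icc 1 (a α (i + 1)) | δ ≤ ‖r • ((q α i : ℤ) • y)‖}
  have hcard_R (i : ℕ) : ((R i).image (· * q α i)).card = (R i).card :=
    Finset.card_image_of_injective _ fun _ _ => Nat.eq_of_mul_eq_mul_right (q_pos hG i)
  have hblock {i : ℕ} (hi : i ≠ 0) :
      ((R i).image (· * q α i) : Set ℕ) ⊆ Set.Ico (q α i) (q α (i + 1)) := by
    rw [Finset.coe_image]
    rintro _ ⟨r, hr, rfl⟩
    obtain ⟨hr_pos, hra⟩ := Finset.mem_Icc.1 (Finset.mem_filter.1 hr).1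
    exact ⟨Nat.le_mul_of_pos_left _ hr_pos,
      (Nat.mul_le_mul_right _ hra).trans_lt (a_mul_q_lt_q_succ hG hi)⟩
  have hdisjoint : (F : Set ℕ).PairwiseDisjoint fun i => (R i).image (· * q α i) :=
    fun i hi k hk hik => Finset.disjoint_coe.1 <|
      ((monotone_q hG).pairwise_disjoint_on_Ico_succ hik).mono
        (hblock (hF i hi).1) (hblock (hF k hk).1)
  have hsub : ((F.biUnion fun i => (R i).image (· * q α i) : Finset ℕ) : Set ℕ) ⊆
      ({v : ℕ | δ ≤ ‖(v : ℤ) • y‖} ∩ blockMultiples α) ∩ Set.Iio (q α n) := by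
    intro v hv
    obtain ⟨i, hi, hvi⟩ := Finset.mem_biUnion.1 (Finset.mem_coe.1 hv)
    have hlt : v < q α n :=
      (hblock (hF i hi).1 hvi).2.trans_le (monotone_q hG (Nat.succ_le_of_lt (hF i hi).2.1))
    obtain ⟨r, hr, rfl⟩ := Finset.mem_image.1 hvi
    obtain ⟨hrI, hr_large⟩ := Finset.mem_filter.1 hr
    refine ⟨⟨?_, i, r, (Finset.mem_Icc.1 hrI).1, (Finset.mem_Icc.1 hrI).2, rfl⟩, hlt⟩
    rwa [← natCast_zsmul, smul_smul, ← Nat.cast_mul] at hr_large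
  calc ∑ i ∈ F, a α (i + 1) ≤ ∑ i ∈ F, 2 * (R i).card :=
        Finset.sum_le_sum fun i hi => le_two_mul_card_le_norm_nsmul (hF i hi).2.2 _
    _ = 2 * ((F.biUnion fun i => (R i).image (· * q α i) : Finset ℕ) : Set ℕ).ncard := by
        rw [Set.ncard_coe_finset, Finset.card_biUnion hdisjoint, ← Finset.mul_sum]
        simp only [hcard_R]
    _ ≤ _ := by
        gcongr
        exact (Set.finite_Iio _).subset Set.inter_subset_right

theorem natCast_le_sum_a (hG : ∀ n, G α n ∈ Set.Ioo (0 : ℝ) 1) (n : ℕ) :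
    n ≤ ∑ i ∈ Finset.range n, a α (i + 1) := by
  simpa using Finset.card_nsmul_le_sum (Finset.range n) (fun i => a α (i + 1)) 1
    fun i _ => one_le_a_succ hG i

theorem infinite_of_frequently_sum_a_le {D : Set ℕ} (hG : ∀ n, G α n ∈ Set.Ioo (0 : ℝ) 1) {c : ℝ}
    (hc : 0 < c) (hweight : ∃ᶠ n in atTop, c * (∑ i ∈ Finset.range n, a α (i + 1) : ℕ) ≤
      (∑ i ∈ Finset.range n, D.indicator (fun i => a α (i + 1)) i : ℕ)) : D.Infinite := by
  intro hfinite
  set C := ∑ i ∈ hfinite.toFinset, a α (i + 1)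
  have hbounded (n : ℕ) : ∑ i ∈ Finset.range n, D.indicator (fun i => a α (i + 1)) i ≤ C := by
    classical
    rw [Finset.sum_indicator_eq_sum_filter]
    exact Finset.sum_le_sum_of_subset fun i hi => hfinite.mem_toFinset.2 (Finset.mem_filter.1 hi).2
  have hlarge : ∀ᶠ n : ℕ in atTop, (C : ℝ) < c * n :=
    (tendsto_natCast_atTop_atTop.const_mul_atTop hc).eventually_gt_atTop _
  obtain ⟨n, hn, hCn⟩ := (hweight.and_eventually hlarge).exists
  have hle : (n : ℝ) ≤ (∑ i ∈ Finset.range n, a α (i + 1) : ℕ) := by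
    exact_mod_cast natCast_le_sum_a hG n
  have : ((∑ i ∈ Finset.range n, D.indicator (fun i => a α (i + 1)) i : ℕ) : ℝ) ≤ C := by
    exact_mod_cast hbounded n
  have := mul_le_mul_of_nonneg_left hle hc.le
  linarith

theorem exists_sum_indicator_a_le {D : Set ℕ} (hG : ∀ n, G α n ∈ Set.Ioo (0 : ℝ) 1)
    {y : Circle1} {δ : ℝ} (hy : ∀ᶠ i in atTop, i ∈ D → 2 * δ ≤ ‖(q α i : ℤ) • y‖) :
    ∃ C : ℕ, ∀ n, ∑ i ∈ Finset.range n, D.indicator (fun i => a α (i + 1)) i ≤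
      C + 2 * (({v : ℕ | δ ≤ ‖(v : ℤ) • y‖} ∩ blockMultiples α) ∩ Set.Iio (q α n)).ncard := by
  classical
  obtain ⟨n₀, hn₀⟩ := eventually_atTop.1 hy
  refine ⟨∑ i ∈ Finset.range (n₀ + 1), a α (i + 1), fun n => ?_⟩
  rw [Finset.sum_indicator_eq_sum_filter]
  set F : Finset ℕ := {i ∈ Finset.range n | i ∈ D ∧ n₀ < i}
  have hcover : {i ∈ Finset.range n | i ∈ D} ⊆
      Finset.range (n₀ + 1) ∪ F := fun i hi => by
    simp only [F, Finset.mem_union, Finset.mem_filter, Finset.mem_range, Nat.lt_succ_iff] at hi ⊢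
    exact (le_or_gt i n₀).imp id fun h => ⟨hi.1, hi.2, h⟩
  have hF : ∀ i ∈ F, i ≠ 0 ∧ i < n ∧ 2 * δ ≤ ‖(q α i : ℤ) • y‖ := fun i hi => by
    obtain ⟨hin, hiD, hi₀⟩ := Finset.mem_filter.1 hi
    exact ⟨Nat.ne_zero_of_lt hi₀, Finset.mem_range.1 hin, hn₀ i hi₀.le hiD⟩
  calc ∑ i ∈ Finset.range n with i ∈ D, a α (i + 1)
      ≤ ∑ i ∈ Finset.range (n₀ + 1) ∪ F, a α (i + 1) := Finset.sum_le_sum_of_subset hcover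
    _ ≤ ∑ i ∈ Finset.range (n₀ + 1), a α (i + 1) + ∑ i ∈ F, a α (i + 1) := by
        rw [← Finset.sum_union_inter]
        exact le_self_add
    _ ≤ _ := by
        gcongr
        exact sum_a_le_two_mul_ncard_blockMultiples hG hF

theorem not_mem_statCharSet_of_frequently_sum_a_le {D : Set ℕ} {x : ℕ → ℕ}
    (hG : ∀ n, G α n ∈ Set.Ioo (0 : ℝ) 1) (hmono : StrictMono x)
    (hrange : Set.range x = blockMultiples α) {y : Circle1} {δ : ℝ} (hδ : 0 < δ)
    (hy : ∀ᶠ i in atTop, i ∈ D → 2 * δ ≤ ‖(q α i : ℤ) • y‖) {c : ℝ} (hc : 0 < c)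
    (hweight : ∃ᶠ n in atTop, c * (∑ i ∈ Finset.range n, a α (i + 1) : ℕ) ≤
      (∑ i ∈ Finset.range n, D.indicator (fun i => a α (i + 1)) i : ℕ)) :
    y ∉ statCharSet (fun n => (x n : ℤ)) := by
  intro hmem
  have hdensity := densityZero_iff_tendsto_ncard_Iio.1 (hmem δ hδ)
  choose N hN using fun n => hrange.ge (q_mem_blockMultiples hG n)
  have hN_atTop : Tendsto N atTop atTop := tendsto_atTop.2 fun b =>
    ((tendsto_q_atTop hG).eventually_ge_atTop (x b)).mono fun n hn =>
      hmono.le_iff_le.1 (hn.trans_eq (hN n).symm)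
  have hcount (A : Set ℕ) (n : ℕ) :
      (x ⁻¹' A ∩ Set.Iio (N n)).ncard = ((A ∩ blockMultiples α) ∩ Set.Iio (q α n)).ncard := by
    rw [← hN n, ← hrange, ncard_inter_range_inter_Iio hmono]
  obtain ⟨C, hC⟩ := exists_sum_indicator_a_le hG hy
  have hN_le (n : ℕ) : N n ≤ ∑ i ∈ Finset.range n, a α (i + 1) := by
    have := ncard_blockMultiples_inter_Iio_le hG n
    rwa [← Set.univ_inter (blockMultiples α), ← hcount, Set.preimage_univ, Set.univ_inter,
      Set.ncard_Iio_nat] at this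
  have hlim := (tendsto_const_div_atTop_nhds_zero_nat (C : ℝ)).add (hdensity.const_mul 2)
  rw [mul_zero, add_zero] at hlim
  obtain ⟨n, hn, hsmall, hpos⟩ := (hweight.and_eventually (hN_atTop.eventually
    ((hlim.eventually_lt_const hc).and (eventually_gt_atTop 0)))).exists
  have hbad : (∑ i ∈ Finset.range n, D.indicator (fun i => a α (i + 1)) i : ℕ) ≤
      (C + 2 * (x ⁻¹' {v : ℕ | δ ≤ ‖(v : ℤ) • y‖} ∩ Set.Iio (N n)).ncard : ℝ) := by
    rw [hcount]
    exact_mod_cast hC n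
  have hN_pos : (0 : ℝ) < N n := by exact_mod_cast hpos
  rw [← mul_div_assoc, ← add_div, div_lt_iff₀ hN_pos] at hsmall
  have hcN : c * N n ≤ c * (∑ i ∈ Finset.range n, a α (i + 1) : ℕ) := by
    gcongr
    exact hN_le n
  exact hsmall.not_ge (hcN.trans (hn.trans hbad))

theorem injective_ostrowskiSum_bitDigits {D : Set ℕ} {e : ℕ → ℕ}
    (hG : ∀ n, G α n ∈ Set.Ioo (0 : ℝ) 1) (hD : SparseAtTop D) (ha : ∀ n ∈ D, 4 ≤ a α (n + 1))
    (he : ∀ k, ∃ᶠ n in atTop, n ∈ D ∧ e n = k) :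
    Function.Injective fun t : ℕ → Bool =>
      (ostrowskiSum α (bitDigits α D (t ∘ e)) : Circle1) := by
  intro t t' h
  ext k
  obtain ⟨n, ⟨hn, rfl⟩, heq⟩ :=
    ((he k).and_eventually (eventually_bit_eq_of_ostrowskiSum_eq hG hD ha h)).exists
  exact heq hn

end CF

theorem Circle1.mk_set_le_continuum (S : Set Circle1) : Cardinal.mk S ≤ Cardinal.continuum :=
  (Cardinal.mk_set_le S).trans (Cardinal.mk_quotient_le.trans_eq Cardinal.mk_real)

theorem stmt_11_general {α : ℝ} (hα : α ∈ Set.Ioo (0 : ℝ) 1) (hirr : Irrational α) {D : Set ℕ}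
    (hD : SparseAtTop D) (ha : ∀ n ∈ D, 4 ≤ a α (n + 1)) {c : ℝ} (hc : 0 < c)
    (hweight : ∃ᶠ n in atTop, c * (∑ i ∈ Finset.range n, a α (i + 1) : ℕ) ≤
      (∑ i ∈ Finset.range n, D.indicator (fun i => a α (i + 1)) i : ℕ))
    {x : ℕ → ℕ} (hmono : StrictMono x) (hrange : Set.range x = blockMultiples α) :
    Cardinal.mk ↥(statCharSet (fun n => (q α n : ℤ)) \ statCharSet (fun n => (x n : ℤ))) =
      Cardinal.continuum := by
  have hG := G_mem_Ioo hα hirr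
  obtain ⟨e, he⟩ :=
    exists_frequently_mem_and_eq (infinite_of_frequently_sum_a_le hG hc hweight)
  set f : (ℕ → Bool) → Circle1 := fun t => ostrowskiSum α (bitDigits α D (t ∘ e))
  have hf_mem (t : ℕ → Bool) : f t ∈ statCharSet (fun n => (q α n : ℤ)) :=
    ostrowskiSum_mem_statCharSet_q hG (bitDigits_le D _)
      (hD.densityZero.mono Set.support_indicator_subset)
  have hf_not_mem (t : ℕ → Bool) : f t ∉ statCharSet (fun n => (x n : ℤ)) :=
    not_mem_statCharSet_of_frequently_sum_a_le hG hmono hrange (by norm_num : (0 : ℝ) < 1 / 20)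
      (by simpa only [show (2 : ℝ) * (1 / 20) = 1 / 10 by norm_num] using
        eventually_le_norm_q_smul_ostrowskiSum hG hD ha (t ∘ e)) hc hweight
  refine (Circle1.mk_set_le_continuum _).antisymm ?_
  calc Cardinal.continuum = Cardinal.mk (ℕ → Bool) := by simp
    _ ≤ _ := Cardinal.mk_le_of_injective (f := fun t => ⟨f t, hf_mem t, hf_not_mem t⟩)
      fun t t' h => injective_ostrowskiSum_bitDigits hG hD ha he (congrArg Subtype.val h)

/-! ### Blocks at the perfect squares -/

theorem sparseAtTop_isSquare_succ : SparseAtTop {k | IsSquare (k + 1)} := by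
  intro L
  filter_upwards [eventually_ge_atTop (L ^ 2)] with i hi
  rintro ⟨m, hm⟩ k ⟨l, hl⟩ hik hki
  have hLm : L < m := by nlinarith
  obtain hml | rfl | hlm := lt_trichotomy m l
  · nlinarith
  · omega
  · nlinarith

theorem infinite_isSquare_succ : {k | IsSquare (k + 1)}.Infinite :=
  Set.infinite_of_forall_exists_gt fun n => ⟨n ^ 2 + 4 * n + 3, ⟨n + 2, by ring⟩, by nlinarith⟩

theorem frequently_half_sum_le_sum_indicator {D : Set ℕ} (hD : D.Infinite) {f : ℕ → ℕ}
    (hf : ∀ k ∈ D, k + 1 ≤ f k) (hf_compl : ∀ k ∉ D, f k ≤ 1) :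
    ∃ᶠ n in atTop, (1 / 2 : ℝ) * (∑ k ∈ Finset.range n, f k : ℕ) ≤
      (∑ k ∈ Finset.range n, D.indicator f k : ℕ) := by
  refine (tendsto_add_atTop_nat 1).frequently
    ((Nat.frequently_atTop_iff_infinite.2 hD).mono fun k hk => ?_)
  have hlast : k + 1 ≤ ∑ i ∈ Finset.range (k + 1), D.indicator f i := by
    rw [Finset.sum_range_succ, Set.indicator_of_mem hk]
    exact le_add_left (hf k hk)
  have hle (i : ℕ) : f i ≤ 1 + D.indicator f i := by
    by_cases hi : i ∈ D
    · rw [Set.indicator_of_mem hi]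
      exact Nat.le_add_left _ _
    · exact (hf_compl i hi).trans le_self_add
  have hsum : ∑ i ∈ Finset.range (k + 1), f i ≤
      2 * ∑ i ∈ Finset.range (k + 1), D.indicator f i := by
    have := Finset.sum_le_sum fun i (_ : i ∈ Finset.range (k + 1)) => hle i
    simp only [Finset.sum_add_distrib, Finset.sum_const, Finset.card_range, smul_eq_mul,
      mul_one] at this
    omega
  have : ((∑ i ∈ Finset.range (k + 1), f i : ℕ) : ℝ) ≤
      2 * (∑ i ∈ Finset.range (k + 1), D.indicator f i : ℕ) := by exact_mod_cast hsum
  linarith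

/-- **Corollary 3.5.** For `α` with `a_{n²} = 4n²` and `aₙ = 1` otherwise,
`|t^s_(qₙ)(𝕋) \ t^s_(xₙ)(𝕋)| = 𝔠`. -/
theorem stmt_11 (α : ℝ) (hα : α ∈ Set.Ioo (0 : ℝ) 1) (hirr : Irrational α)
    (hsq : ∀ m : ℕ, 1 ≤ m → a α (m ^ 2) = 4 * m ^ 2)
    (hnsq : ∀ n : ℕ, 1 ≤ n → (∀ m : ℕ, n ≠ m ^ 2) → a α n = 1)
    (x : ℕ → ℕ) (hmono : StrictMono x)
    (hrange : Set.range x =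
      {m : ℕ | ∃ n r : ℕ, 1 ≤ r ∧ r ≤ a α (n + 1) ∧ m = r * q α n}) :
    Cardinal.mk
      ↥(statCharSet (fun n => (q α n : ℤ)) \ statCharSet (fun n => (x n : ℤ))) =
      Cardinal.continuum := by
  have ha_sq : ∀ k ∈ {k | IsSquare (k + 1)}, a α (k + 1) = 4 * (k + 1) := by
    rintro k ⟨m, hm⟩
    rw [← sq] at hm
    rw [hm, hsq m (Nat.one_le_iff_ne_zero.2 (by rintro rfl; simp at hm))]
  have ha_nsq : ∀ k ∉ {k | IsSquare (k + 1)}, a α (k + 1) = 1 := fun k hk =>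
    hnsq (k + 1) k.succ_pos fun m hm => hk ⟨m, hm.trans (sq m)⟩
  have hweight := frequently_half_sum_le_sum_indicator infinite_isSquare_succ
    (fun k hk => (ha_sq k hk).ge.trans' (Nat.le_mul_of_pos_left _ four_pos))
    fun k hk => (ha_nsq k hk).le
  exact stmt_11_general hα hirr sparseAtTop_isSquare_succ
    (fun k hk => (ha_sq k hk).ge.trans' (Nat.le_mul_of_pos_right 4 k.succ_pos))
    one_half_pos hweight hmono hrange
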